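/- arXiv:1509.01492 — 2 statements merged into one kernel-verified Lean document; each statement's English description precedes it below -/
import Mathlib

section
/- In the Z₃-graded quantum Weyl superalgebra W_q(2|1), the elements (∂x)³ and (∂y)³ are central: each of them commutes with all six generators x, y, θ, ∂x, ∂y, ∂θ (and hence with every element of the algebra). -/
/-!
`W_q(2|1)`: the Z₃-graded quantum Weyl superalgebra, the unital associative
ℂ-algebra with generators `x`, `y`, `θ`, `∂x`, `∂y`, `∂θ`, quotient of the free
algebra by the two-sided ideal generated by the relations
`xy = q·yx`, `xθ = q·θx`, `yθ = q²·θy`, `y³ = 0`, `θ³ = 0`;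
`∂x·x = 1 + q·x·∂x + (q−1)·θ·∂θ`, `∂x·y = q²·y·∂x`, `∂x·θ = θ·∂x`,
`∂y·x = q²·x·∂y`, `∂y·θ = q²·θ·∂y`, `∂y·y = 1 + q·y·∂y + (q−1)(x·∂x + θ·∂θ)`,
`∂θ·x = q·x·∂θ`, `∂θ·y = q²·y·∂θ`, `∂θ·θ = 1 + q·θ·∂θ`;
`∂x·∂y = q²·∂y·∂x`, `∂y·∂θ = q·∂θ·∂y`, `∂θ·∂x = ∂x·∂θ`, `(∂θ)³ = 0`.
-/

noncomputable section

inductive Gen : Type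
  | x | y | th | px | py | pth

abbrev FA : Type := FreeAlgebra ℂ Gen

def Xf : FA := FreeAlgebra.ι ℂ Gen.x
def Yf : FA := FreeAlgebra.ι ℂ Gen.y
def Tf : FA := FreeAlgebra.ι ℂ Gen.th
def PXf : FA := FreeAlgebra.ι ℂ Gen.px
def PYf : FA := FreeAlgebra.ι ℂ Gen.py
def PTf : FA := FreeAlgebra.ι ℂ Gen.pth

/-- The defining relations of the Z₃-graded quantum Weyl superalgebra. -/
inductive QRel (q : ℂ) : FA → FA → Prop
  | xy : QRel q (Xf * Yf) (q • (Yf * Xf))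
  | xth : QRel q (Xf * Tf) (q • (Tf * Xf))
  | yth : QRel q (Yf * Tf) ((q ^ 2) • (Tf * Yf))
  | ycube : QRel q (Yf ^ 3) 0
  | thcube : QRel q (Tf ^ 3) 0
  | pxx : QRel q (PXf * Xf) (1 + q • (Xf * PXf) + (q - 1) • (Tf * PTf))
  | pxy : QRel q (PXf * Yf) ((q ^ 2) • (Yf * PXf))
  | pxth : QRel q (PXf * Tf) (Tf * PXf)
  | pyx : QRel q (PYf * Xf) ((q ^ 2) • (Xf * PYf))
  | pyth : QRel q (PYf * Tf) ((q ^ 2) • (Tf * PYf))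
  | pyy : QRel q (PYf * Yf) (1 + q • (Yf * PYf) + (q - 1) • (Xf * PXf + Tf * PTf))
  | pthx : QRel q (PTf * Xf) (q • (Xf * PTf))
  | pthy : QRel q (PTf * Yf) ((q ^ 2) • (Yf * PTf))
  | pthth : QRel q (PTf * Tf) (1 + q • (Tf * PTf))
  | pxpy : QRel q (PXf * PYf) ((q ^ 2) • (PYf * PXf))
  | pypth : QRel q (PYf * PTf) (q • (PTf * PYf))
  | pthpx : QRel q (PTf * PXf) (PXf * PTf)
  | pthcube : QRel q (PTf ^ 3) 0

/-- The Z₃-graded quantum Weyl superalgebra `W_q(2|1)`. -/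
abbrev Wsp (q : ℂ) : Type := RingQuot (QRel q)

def Xg (q : ℂ) : Wsp q := RingQuot.mkAlgHom ℂ (QRel q) Xf
def Yg (q : ℂ) : Wsp q := RingQuot.mkAlgHom ℂ (QRel q) Yf
def Tg (q : ℂ) : Wsp q := RingQuot.mkAlgHom ℂ (QRel q) Tf
def PXg (q : ℂ) : Wsp q := RingQuot.mkAlgHom ℂ (QRel q) PXf
def PYg (q : ℂ) : Wsp q := RingQuot.mkAlgHom ℂ (QRel q) PYf
def PTg (q : ℂ) : Wsp q := RingQuot.mkAlgHom ℂ (QRel q) PTf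

section CubeCommutation

variable {R A : Type*} [CommRing R] [Ring A] [Algebra R A]

/-- If `a` and `b` commute up to a cube root of unity, then `a ^ 3` commutes with `b`. -/
theorem commute_cube_of_mul_eq_smul {c : R} (hc : c ^ 3 = 1) {a b : A}
    (h : a * b = c • (b * a)) : Commute (a ^ 3) b := by
  have h2 : a * (a * b) = c ^ 2 • (b * (a * a)) := by
    rw [h, mul_smul_comm, ← mul_assoc, h, smul_mul_assoc, smul_smul, mul_assoc, sq]
  have h3 : a * (a * (a * b)) = c ^ 3 • (b * (a * (a * a))) := by
    rw [h2, mul_smul_comm, ← mul_assoc, h, smul_mul_assoc, smul_smul, mul_assoc, pow_succ c 2]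
  simpa [Commute, SemiconjBy, pow_succ, mul_assoc, hc] using h3

/-- If `a * b = n + c • (b * a)` with `n` commuting with `a` and `1 + c + c ^ 2 = 0`, then
`a ^ 3` commutes with `b`. -/
theorem commute_cube_of_mul_eq_add_smul {c : R} (hc : 1 + c + c ^ 2 = 0) {a b n : A}
    (hn : Commute a n) (h : a * b = n + c • (b * a)) : Commute (a ^ 3) b := by
  have hc3 : c ^ 3 = 1 := by linear_combination (c - 1) * hc
  have h2 : a * (a * b) = (1 + c) • (n * a) + c ^ 2 • (b * (a * a)) := by
    rw [h, mul_add, hn.eq, mul_smul_comm, ← mul_assoc, h, add_mul, smul_mul_assoc, mul_assoc b]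
    module
  have h3 : a * (a * (a * b)) = (1 + c + c ^ 2) • (n * (a * a)) + c ^ 3 • (b * (a * (a * a))) := by
    rw [h2, mul_add, mul_smul_comm, mul_smul_comm, ← mul_assoc a n, hn.eq, ← mul_assoc a b, h,
      add_mul, smul_mul_assoc, mul_assoc b, mul_assoc n]
    module
  rw [hc, hc3, zero_smul, one_smul, zero_add] at h3
  simpa [Commute, SemiconjBy, pow_succ, mul_assoc] using h3

/-- If `a * b = c • (b * a)` and `a * b' = c' • (b' * a)` with `c * c' = 1`, then `a` commutes
with `b * b'`. -/
theorem commute_mul_of_mul_eq_smul {c c' : R} (hc : c * c' = 1) {a b b' : A}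
    (h : a * b = c • (b * a)) (h' : a * b' = c' • (b' * a)) : Commute a (b * b') := by
  rw [Commute, SemiconjBy, ← mul_assoc, h, smul_mul_assoc, mul_assoc, h', mul_smul_comm,
    smul_smul, hc, one_smul, mul_assoc]

end CubeCommutation

/-- An element of `W_q(2|1)` commuting with the six generators is central. -/
theorem Wsp.commute_of_commute_generators {q : ℂ} {z : Wsp q}
    (hx : Commute z (Xg q)) (hy : Commute z (Yg q)) (hth : Commute z (Tg q))
    (hpx : Commute z (PXg q)) (hpy : Commute z (PYg q)) (hpth : Commute z (PTg q))
    (a : Wsp q) : Commute z a := by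
  obtain ⟨f, rfl⟩ := RingQuot.mkAlgHom_surjective ℂ (QRel q) a
  induction f using FreeAlgebra.induction with
  | grade0 r => rw [AlgHom.commutes]; exact (Algebra.commutes r z).symm
  | grade1 g => cases g <;> assumption
  | mul f g hf hg => rw [map_mul]; exact hf.mul_right hg
  | add f g hf hg => rw [map_add]; exact hf.add_right hg

/-- In `W_q(2|1)` the elements `(∂x)³` and `(∂y)³` are central: each commutes
with all six generators `x`, `y`, `θ`, `∂x`, `∂y`, `∂θ` (and hence with every
element of the algebra). -/
theorem partial_cubes_central (q : ℂ) (hq3 : q ^ 3 = 1) (hq1 : q ≠ 1) :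
    ((PXg q) ^ 3 * Xg q = Xg q * (PXg q) ^ 3 ∧
     (PXg q) ^ 3 * Yg q = Yg q * (PXg q) ^ 3 ∧
     (PXg q) ^ 3 * Tg q = Tg q * (PXg q) ^ 3 ∧
     (PXg q) ^ 3 * PXg q = PXg q * (PXg q) ^ 3 ∧
     (PXg q) ^ 3 * PYg q = PYg q * (PXg q) ^ 3 ∧
     (PXg q) ^ 3 * PTg q = PTg q * (PXg q) ^ 3 ∧
     (∀ a : Wsp q, (PXg q) ^ 3 * a = a * (PXg q) ^ 3)) ∧
    ((PYg q) ^ 3 * Xg q = Xg q * (PYg q) ^ 3 ∧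
     (PYg q) ^ 3 * Yg q = Yg q * (PYg q) ^ 3 ∧
     (PYg q) ^ 3 * Tg q = Tg q * (PYg q) ^ 3 ∧
     (PYg q) ^ 3 * PXg q = PXg q * (PYg q) ^ 3 ∧
     (PYg q) ^ 3 * PYg q = PYg q * (PYg q) ^ 3 ∧
     (PYg q) ^ 3 * PTg q = PTg q * (PYg q) ^ 3 ∧
     (∀ a : Wsp q, (PYg q) ^ 3 * a = a * (PYg q) ^ 3)) := by
  have hsum : 1 + q + q ^ 2 = 0 := by
    have h : (q - 1) * (1 + q + q ^ 2) = 0 := by linear_combination hq3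
    exact (mul_eq_zero.mp h).resolve_left (sub_ne_zero.mpr hq1)
  have hq6 : (q ^ 2) ^ 3 = 1 := by rw [← pow_mul, mul_comm, pow_mul, hq3, one_pow]
  have pxx : PXg q * Xg q = 1 + q • (Xg q * PXg q) + (q - 1) • (Tg q * PTg q) := by
    simpa [PXg, Xg, Tg, PTg] using RingQuot.mkAlgHom_rel ℂ (QRel.pxx (q := q))
  have pxy : PXg q * Yg q = q ^ 2 • (Yg q * PXg q) := by
    simpa [PXg, Yg] using RingQuot.mkAlgHom_rel ℂ (QRel.pxy (q := q))
  have pxth : Commute (PXg q) (Tg q) := by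
    simpa [Commute, SemiconjBy, PXg, Tg] using RingQuot.mkAlgHom_rel ℂ (QRel.pxth (q := q))
  have pyx : PYg q * Xg q = q ^ 2 • (Xg q * PYg q) := by
    simpa [PYg, Xg] using RingQuot.mkAlgHom_rel ℂ (QRel.pyx (q := q))
  have pyth : PYg q * Tg q = q ^ 2 • (Tg q * PYg q) := by
    simpa [PYg, Tg] using RingQuot.mkAlgHom_rel ℂ (QRel.pyth (q := q))
  have pyy : PYg q * Yg q =
      1 + q • (Yg q * PYg q) + (q - 1) • (Xg q * PXg q + Tg q * PTg q) := by
    simpa [PXg, PYg, PTg, Xg, Yg, Tg] using RingQuot.mkAlgHom_rel ℂ (QRel.pyy (q := q))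
  have pxpy : PXg q * PYg q = q ^ 2 • (PYg q * PXg q) := by
    simpa [PXg, PYg] using RingQuot.mkAlgHom_rel ℂ (QRel.pxpy (q := q))
  have pypth : PYg q * PTg q = q • (PTg q * PYg q) := by
    simpa [PYg, PTg] using RingQuot.mkAlgHom_rel ℂ (QRel.pypth (q := q))
  have pthpx : Commute (PTg q) (PXg q) := by
    simpa [Commute, SemiconjBy, PTg, PXg] using RingQuot.mkAlgHom_rel ℂ (QRel.pthpx (q := q))
  have pypx : PYg q * PXg q = q • (PXg q * PYg q) := by
    rw [pxpy, smul_smul, ← pow_succ', hq3, one_smul]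
  have hqq : q ^ 2 * q = 1 := by rw [← pow_succ, hq3]
  have hX : Commute (PXg q ^ 3) (Xg q) := by
    refine commute_cube_of_mul_eq_add_smul hsum (n := 1 + (q - 1) • (Tg q * PTg q)) ?_
      (by rw [pxx, add_right_comm])
    exact (Commute.one_right _).add_right ((pxth.mul_right pthpx.symm).smul_right _)
  have hY : Commute (PYg q ^ 3) (Yg q) := by
    refine commute_cube_of_mul_eq_add_smul hsum
      (n := 1 + (q - 1) • (Xg q * PXg q + Tg q * PTg q)) ?_ (by rw [pyy, add_right_comm])
    exact (Commute.one_right _).add_right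
      (((commute_mul_of_mul_eq_smul hqq pyx pypx).add_right
        (commute_mul_of_mul_eq_smul hqq pyth pypth)).smul_right _)
  have hXY := commute_cube_of_mul_eq_smul hq6 pxy
  have hXT := pxth.pow_left 3
  have hXPX := Commute.pow_self (PXg q) 3
  have hXPY := commute_cube_of_mul_eq_smul hq6 pxpy
  have hXPT := pthpx.symm.pow_left 3
  have hYX := commute_cube_of_mul_eq_smul hq6 pyx
  have hYT := commute_cube_of_mul_eq_smul hq6 pyth
  have hYPX := commute_cube_of_mul_eq_smul hq3 pypx
  have hYPY := Commute.pow_self (PYg q) 3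
  have hYPT := commute_cube_of_mul_eq_smul hq3 pypth
  exact ⟨⟨hX, hXY, hXT, hXPX, hXPY, hXPT,
      Wsp.commute_of_commute_generators hX hXY hXT hXPX hXPY hXPT⟩,
    hYX, hY, hYT, hYPX, hYPY, hYPT,
    Wsp.commute_of_commute_generators hYX hY hYT hYPX hYPY hYPT⟩
end
end

section
/- Let R̂ be the 9×9 complex matrix, with rows and columns indexed by pairs (i,j) ∈ {1,2,3}² ordered lexicographically, whose nonzero entries are: R̂^{11}_{11} = 1, R̂^{12}_{21} = q, R̂^{13}_{13} = 1−q², R̂^{13}_{31} = 1, R̂^{21}_{12} = q, R̂^{21}_{21} = 1−q², R̂^{22}_{22} = 1, R̂^{23}_{23} = 1−q², R̂^{23}_{32} = q, R̂^{31}_{13} = q², R̂^{32}_{23} = q, R̂^{33}_{33} = 1. Setting X₁ = x, X₂ = y, X₃ = θ and ∂₁ = ∂x, ∂₂ = ∂y, ∂₃ = ∂θ in the Z₃-graded quantum Weyl superalgebra W_q(2|1), the following hold for all i, j ∈ {1,2,3}: (a) ∂_i·X_j = δ_{ij}·1 + q·Σ_{k,l} R̂^{jk}_{il}·X_l·∂_k,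 and (b) ∂_i·∂_j = Σ_{k,l} R̂^{lk}_{ji}·∂_k·∂_l. -/
/-!
`W_q(2|1)`: the Z₃-graded quantum Weyl superalgebra, the unital associative
ℂ-algebra with generators `x`, `y`, `θ`, `∂x`, `∂y`, `∂θ`, quotient of the free
algebra by the two-sided ideal generated by the relations
`xy = q·yx`, `xθ = q·θx`, `yθ = q²·θy`, `y³ = 0`, `θ³ = 0`;
`∂x·x = 1 + q·x·∂x + (q−1)·θ·∂θ`, `∂x·y = q²·y·∂x`, `∂x·θ = θ·∂x`,
`∂y·x = q²·x·∂y`, `∂y·θ = q²·θ·∂y`, `∂y·y = 1 + q·y·∂y + (q−1)(x·∂x + θ·∂θ)`,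
`∂θ·x = q·x·∂θ`, `∂θ·y = q²·y·∂θ`, `∂θ·θ = 1 + q·θ·∂θ`;
`∂x·∂y = q²·∂y·∂x`, `∂y·∂θ = q·∂θ·∂y`, `∂θ·∂x = ∂x·∂θ`, `(∂θ)³ = 0`.
-/

noncomputable section

/-- The R̂-matrix associated with `ℝ_q(2|1)`: rows indexed by `(i,j)`, columns by
`(k,l)`, with indices `0,1,2` standing for `1,2,3`. -/
def Rhat (q : ℂ) (i j k l : Fin 3) : ℂ :=
  if i = 0 ∧ j = 0 ∧ k = 0 ∧ l = 0 then 1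
  else if i = 0 ∧ j = 1 ∧ k = 1 ∧ l = 0 then q
  else if i = 0 ∧ j = 2 ∧ k = 0 ∧ l = 2 then 1 - q ^ 2
  else if i = 0 ∧ j = 2 ∧ k = 2 ∧ l = 0 then 1
  else if i = 1 ∧ j = 0 ∧ k = 0 ∧ l = 1 then q
  else if i = 1 ∧ j = 0 ∧ k = 1 ∧ l = 0 then 1 - q ^ 2
  else if i = 1 ∧ j = 1 ∧ k = 1 ∧ l = 1 then 1
  else if i = 1 ∧ j = 2 ∧ k = 1 ∧ l = 2 then 1 - q ^ 2
  else if i = 1 ∧ j = 2 ∧ k = 2 ∧ l = 1 then q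
  else if i = 2 ∧ j = 0 ∧ k = 0 ∧ l = 2 then q ^ 2
  else if i = 2 ∧ j = 1 ∧ k = 1 ∧ l = 2 then q
  else if i = 2 ∧ j = 2 ∧ k = 2 ∧ l = 2 then 1
  else 0

/-- The coordinates `X₁ = x`, `X₂ = y`, `X₃ = θ`. -/
def Xv (q : ℂ) : Fin 3 → Wsp q := ![Xg q, Yg q, Tg q]

/-- The partial derivatives `∂₁ = ∂x`, `∂₂ = ∂y`, `∂₃ = ∂θ`. -/
def Pv (q : ℂ) : Fin 3 → Wsp q := ![PXg q, PYg q, PTg q]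

namespace Wsp

theorem PXg_mul_Xg (q : ℂ) :
    PXg q * Xg q = 1 + q • (Xg q * PXg q) + (q - 1) • (Tg q * PTg q) := by
  simpa [Xg, Yg, Tg, PXg, PYg, PTg] using RingQuot.mkAlgHom_rel ℂ (QRel.pxx (q := q))

theorem PXg_mul_Yg (q : ℂ) :
    PXg q * Yg q = q ^ 2 • (Yg q * PXg q) := by
  simpa [Xg, Yg, Tg, PXg, PYg, PTg] using RingQuot.mkAlgHom_rel ℂ (QRel.pxy (q := q))

theorem PXg_mul_Tg (q : ℂ) :
    PXg q * Tg q = Tg q * PXg q := by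
  simpa [Xg, Yg, Tg, PXg, PYg, PTg] using RingQuot.mkAlgHom_rel ℂ (QRel.pxth (q := q))

theorem PYg_mul_Xg (q : ℂ) :
    PYg q * Xg q = q ^ 2 • (Xg q * PYg q) := by
  simpa [Xg, Yg, Tg, PXg, PYg, PTg] using RingQuot.mkAlgHom_rel ℂ (QRel.pyx (q := q))

theorem PYg_mul_Tg (q : ℂ) :
    PYg q * Tg q = q ^ 2 • (Tg q * PYg q) := by
  simpa [Xg, Yg, Tg, PXg, PYg, PTg] using RingQuot.mkAlgHom_rel ℂ (QRel.pyth (q := q))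

theorem PYg_mul_Yg (q : ℂ) :
    PYg q * Yg q =
      1 + q • (Yg q * PYg q) + (q - 1) • (Xg q * PXg q + Tg q * PTg q) := by
  simpa [Xg, Yg, Tg, PXg, PYg, PTg] using RingQuot.mkAlgHom_rel ℂ (QRel.pyy (q := q))

theorem PTg_mul_Xg (q : ℂ) :
    PTg q * Xg q = q • (Xg q * PTg q) := by
  simpa [Xg, Yg, Tg, PXg, PYg, PTg] using RingQuot.mkAlgHom_rel ℂ (QRel.pthx (q := q))

theorem PTg_mul_Yg (q : ℂ) :
    PTg q * Yg q = q ^ 2 • (Yg q * PTg q) := by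
  simpa [Xg, Yg, Tg, PXg, PYg, PTg] using RingQuot.mkAlgHom_rel ℂ (QRel.pthy (q := q))

theorem PTg_mul_Tg (q : ℂ) :
    PTg q * Tg q = 1 + q • (Tg q * PTg q) := by
  simpa [Xg, Yg, Tg, PXg, PYg, PTg] using RingQuot.mkAlgHom_rel ℂ (QRel.pthth (q := q))

theorem PXg_mul_PYg (q : ℂ) :
    PXg q * PYg q = q ^ 2 • (PYg q * PXg q) := by
  simpa [Xg, Yg, Tg, PXg, PYg, PTg] using RingQuot.mkAlgHom_rel ℂ (QRel.pxpy (q := q))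

theorem PYg_mul_PTg (q : ℂ) :
    PYg q * PTg q = q • (PTg q * PYg q) := by
  simpa [Xg, Yg, Tg, PXg, PYg, PTg] using RingQuot.mkAlgHom_rel ℂ (QRel.pypth (q := q))

theorem PTg_mul_PXg (q : ℂ) :
    PTg q * PXg q = PXg q * PTg q := by
  simpa [Xg, Yg, Tg, PXg, PYg, PTg] using RingQuot.mkAlgHom_rel ℂ (QRel.pthpx (q := q))

end Wsp

/-- In `W_q(2|1)`: (a) `∂_i·X_j = δ_{ij} + q·Σ_{k,l} R̂^{jk}_{il}·X_l·∂_k`, and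
(b) `∂_i·∂_j = Σ_{k,l} R̂^{lk}_{ji}·∂_k·∂_l`. -/
theorem weyl_Rhat_relations (q : ℂ) (hq3 : q ^ 3 = 1) (hq1 : q ≠ 1) :
    ∀ i j : Fin 3,
      (Pv q i * Xv q j =
        (if i = j then (1 : Wsp q) else 0) +
          q • ∑ k : Fin 3, ∑ l : Fin 3, Rhat q j k i l • (Xv q l * Pv q k)) ∧
      (Pv q i * Pv q j =
        ∑ k : Fin 3, ∑ l : Fin 3, Rhat q l k j i • (Pv q k * Pv q l)) := by
  intro i j
  constructor
  · fin_cases i <;> fin_cases j <;>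
      simp [Fin.sum_univ_three, Rhat, Xv, Pv,
        Wsp.PXg_mul_Xg q, Wsp.PXg_mul_Yg q, Wsp.PXg_mul_Tg q, Wsp.PYg_mul_Xg q,
        Wsp.PYg_mul_Tg q, Wsp.PYg_mul_Yg q, Wsp.PTg_mul_Xg q, Wsp.PTg_mul_Yg q,
        Wsp.PTg_mul_Tg q] <;>
      match_scalars <;> grind
  · fin_cases i <;> fin_cases j <;>
      simp [Fin.sum_univ_three, Rhat, Pv,
        Wsp.PXg_mul_PYg q, Wsp.PYg_mul_PTg q, Wsp.PTg_mul_PXg q] <;>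
      match_scalars <;> grind
end
end
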